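/- Let A be an associative algebra over a field k of characteristic 0, δ the Hochschild differential on C^•(A) = ⊕_n Hom_k(A^{⊗n}, A), and [-,-] the Gerstenhaber bracket. Then δ is compatible with the bracket: for f ∈ C^•(A) and g homogeneous in Hom_k(A^{⊗m}, A), δ[f,g] = (-1)^{m-1}[δ(f), g] + [f, δ(g)]. -/

import Mathlib

open scoped BigOperators

/-- A Hochschild `m`-cochain `f ∈ Hom_k(A^{⊗m}, A)` encoded as a function on sequences. -/
def toC (k : Type*) {A : Type*} [CommSemiring k] [AddCommMonoid A] [Module k A]
    (m : ℕ) (f : MultilinearMap k (fun _ : Fin m => A) A) : (ℕ → A) → A :=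
  fun v => f (fun j => v (j : ℕ))

/-- The circle product `f ∘ g = ∑ᵢ (-1)^{(i-1)(n+1)} f ∘ᵢ g` in the sequence encoding. -/
noncomputable def circC (k : Type*) {A : Type*} [Field k] [AddCommGroup A] [Module k A]
    (m n : ℕ) (F G : (ℕ → A) → A) : (ℕ → A) → A :=
  fun v => ∑ i : Fin m, ((-1 : k) ^ ((i : ℕ) * (n + 1))) •
    F (fun j => if j < (i : ℕ) then v j
      else if j = (i : ℕ) then G (fun t => v ((i : ℕ) + t))
      else v (j + n - 1))

/-- The Gerstenhaber bracket `[f,g] = f ∘ g - (-1)^{(m-1)(n-1)} g ∘ f`. -/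
noncomputable def gerstC (k : Type*) {A : Type*} [Field k] [AddCommGroup A] [Module k A]
    (m n : ℕ) (F G : (ℕ → A) → A) : (ℕ → A) → A :=
  circC k m n F G - ((-1 : k) ^ (((m : ℤ) - 1) * ((n : ℤ) - 1))) • circC k n m G F

/-- The Hochschild differential of an `n`-cochain, in the sequence encoding. -/
noncomputable def hdelC (k : Type*) {A : Type*} [Field k] [Ring A] [Algebra k A]
    (n : ℕ) (F : (ℕ → A) → A) : (ℕ → A) → A :=
  fun v => v 0 * F (fun j => v (j + 1))
    + ∑ i : Fin n, ((-1 : k) ^ ((i : ℕ) + 1)) •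
        F (fun j => if j < (i : ℕ) then v j
          else if j = (i : ℕ) then v (i : ℕ) * v ((i : ℕ) + 1)
          else v (j + 1))
    + ((-1 : k) ^ (n + 1)) • (F v * v n)

section Insertion

variable {k A : Type*}

/-- The insertion `f ∘ᵢ g` of an `n`-cochain `g` in the slot `i` of `f`, in the sequence encoding. -/
def insC (n i : ℕ) (F G : (ℕ → A) → A) : (ℕ → A) → A :=
  fun v => F (fun j => if j < i then v j
    else if j = i then G (fun t => v (i + t))
    else v (j + n - 1))

theorem insC_insC_seq {n p i j : ℕ} (hj : j < n) (F G H : (ℕ → A) → A) :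
    insC p (i + j) (insC n i F G) H = insC (n + p - 1) i F (insC p j G H) := by
  funext v
  simp only [insC]
  congr 1
  funext l
  rcases lt_trichotomy l i with h | h | h
  · simp [h, show l < i + j by lia]
  · subst h
    simp [Nat.add_assoc]
    congr 1
    funext t
    split_ifs
    · rfl
    · rfl
    · congr 1
      lia
  · rw [if_neg (by lia), if_neg (by lia), if_neg (by lia), if_neg (by lia), if_neg (by lia),
      if_neg (by lia)]
    congr 1
    lia

theorem insC_insC_par [CommSemiring k] [AddCommMonoid A] [Module k A] {n p i j : ℕ} (hij : i < j)
    (F H : (ℕ → A) → A) (g : MultilinearMap k (fun _ : Fin n => A) A) :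
    insC p (j + n - 1) (insC n i F (toC k n g)) H = insC n i (insC p j F H) (toC k n g) := by
  funext v
  simp only [insC, toC]
  congr 1
  funext l
  rcases lt_trichotomy l i with h | h | h
  · simp [h, show l < j by lia, show l < j + n - 1 by lia]
  · subst h
    simp only [lt_irrefl, if_false, if_true, hij]
    congr 1
    funext t
    have := t.2
    rw [if_pos (by lia)]
  · rw [if_neg (by lia), if_neg (by lia)]
    rcases lt_trichotomy l j with h' | h' | h'
    · rw [if_pos (by lia), if_pos h', if_neg (by lia), if_neg (by lia)]
    · subst h'
      rw [if_neg (by lia), if_pos rfl, if_neg (by lia), if_pos rfl]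
      congr 1
      funext t
      rw [if_neg (by lia), if_neg (by lia)]
      congr 1
      lia
    · rw [if_neg (by lia), if_neg (by lia), if_neg (by lia), if_neg (by lia), if_neg (by lia),
        if_neg (by lia)]
      congr 1
      lia

theorem exists_insC_toC_eq [CommSemiring k] [AddCommMonoid A] [Module k A] {m i : ℕ} (hi : i < m)
    (n : ℕ) (f : MultilinearMap k (fun _ : Fin m => A) A) (v : ℕ → A) :
    ∃ L : A →ₗ[k] A, ∀ G : (ℕ → A) → A,
      insC n i (toC k m f) G v = L (G (fun t => v (i + t))) := by
  refine ⟨f.toLinearMap (fun j => if (j : ℕ) < i then v j else v (j + n - 1)) ⟨i, hi⟩,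
    fun G => ?_⟩
  simp only [insC, toC, MultilinearMap.toLinearMap_apply]
  congr 1
  funext j
  by_cases h : j = ⟨i, hi⟩
  · subst h
    simp
  · have h' : (j : ℕ) ≠ i := fun e => h (Fin.ext e)
    simp [h, h']

end Insertion

section Circle

variable {k A : Type*} [Field k]

section Module

variable [AddCommGroup A] [Module k A]

theorem circC_apply (m n : ℕ) (F G : (ℕ → A) → A) (v : ℕ → A) :
    circC k m n F G v
      = ∑ i ∈ Finset.range m, ((-1 : k) ^ (i * (n + 1))) • insC n i F G v :=
  Fin.sum_univ_eq_sum_range (fun i => ((-1 : k) ^ (i * (n + 1))) • insC n i F G v) m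

theorem circC_sub_left (m n : ℕ) (F F' G : (ℕ → A) → A) :
    circC k m n (F - F') G = circC k m n F G - circC k m n F' G := by
  funext v
  simp [circC, smul_sub]

theorem circC_smul_left (m n : ℕ) (c : k) (F G : (ℕ → A) → A) :
    circC k m n (c • F) G = c • circC k m n F G := by
  funext v
  simp [circC, Finset.smul_sum, smul_comm c]

theorem circC_sub_right {m : ℕ} (n : ℕ) (f : MultilinearMap k (fun _ : Fin m => A) A)
    (G G' : (ℕ → A) → A) :
    circC k m n (toC k m f) (G - G')
      = circC k m n (toC k m f) G - circC k m n (toC k m f) G' := by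
  funext v
  simp only [circC_apply, Pi.sub_apply, ← Finset.sum_sub_distrib]
  refine Finset.sum_congr rfl fun i hi => ?_
  obtain ⟨L, hL⟩ := exists_insC_toC_eq (Finset.mem_range.1 hi) n f v
  simp [hL, smul_sub]

theorem circC_smul_right {m : ℕ} (n : ℕ) (c : k) (f : MultilinearMap k (fun _ : Fin m => A) A)
    (G : (ℕ → A) → A) :
    circC k m n (toC k m f) (c • G) = c • circC k m n (toC k m f) G := by
  funext v
  simp only [circC_apply, Pi.smul_apply, Finset.smul_sum]
  refine Finset.sum_congr rfl fun i hi => ?_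
  obtain ⟨L, hL⟩ := exists_insC_toC_eq (Finset.mem_range.1 hi) n f v
  simp [hL, smul_comm c]

/-- The part of `(f ∘ g) ∘ h` where `h` is inserted in `f`, to the left of `g`. -/
noncomputable def leftInsC (k : Type*) {A : Type*} [Field k] [AddCommGroup A] [Module k A]
    (a b c : ℕ) (F G H : (ℕ → A) → A) : (ℕ → A) → A :=
  fun v => ∑ i ∈ Finset.range a, ∑ j ∈ Finset.range i,
    ((-1 : k) ^ (j * (c + 1) + i * (b + 1))) • insC c j (insC b i F G) H v

theorem circC_circC_right {a b c : ℕ} (hbc : 0 < b + c)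
    (f : MultilinearMap k (fun _ : Fin a => A) A) (G H : (ℕ → A) → A) (v : ℕ → A) :
    circC k a (b + c - 1) (toC k a f) (circC k b c G H) v
      = ∑ i ∈ Finset.range a, ∑ j ∈ Finset.range b,
        ((-1 : k) ^ ((i + j) * (c + 1) + i * (b + 1))) •
          insC c (i + j) (insC b i (toC k a f) G) H v := by
  rw [circC_apply]
  refine Finset.sum_congr rfl fun i hi => ?_
  obtain ⟨L, hL⟩ := exists_insC_toC_eq (Finset.mem_range.1 hi) (b + c - 1) f v
  rw [hL, circC_apply, map_sum, Finset.smul_sum]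
  refine Finset.sum_congr rfl fun j hj => ?_
  rw [insC_insC_seq (Finset.mem_range.1 hj), hL, map_smul, smul_smul, ← pow_add]
  congr 1
  rw [show b + c - 1 + 1 = b + c by lia,
    show (i + j) * (c + 1) + i * (b + 1) = i * (b + c) + j * (c + 1) + 2 * i by ring,
    pow_add _ _ (2 * i), pow_mul]
  simp

theorem circC_circC_left {a b c : ℕ} (hbc : 0 < b + c)
    (f : MultilinearMap k (fun _ : Fin a => A) A)
    (g : MultilinearMap k (fun _ : Fin b => A) A) (H : (ℕ → A) → A) :
    circC k (a + b - 1) c (circC k a b (toC k a f) (toC k b g)) H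
      = leftInsC k a b c (toC k a f) (toC k b g) H
        + circC k a (b + c - 1) (toC k a f) (circC k b c (toC k b g) H)
        + ((-1 : k) ^ ((b + 1) * (c + 1))) •
          leftInsC k a c b (toC k a f) H (toC k b g) := by
  funext v
  have expand : circC k (a + b - 1) c (circC k a b (toC k a f) (toC k b g)) H v
      = ∑ i ∈ Finset.range a, ∑ j ∈ Finset.range (a + b - 1),
        ((-1 : k) ^ (j * (c + 1) + i * (b + 1))) •
          insC c j (insC b i (toC k a f) (toC k b g)) H v := by
    rw [circC_apply, Finset.sum_comm]
    refine Finset.sum_congr rfl fun j _ => ?_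
    rw [insC, circC_apply, Finset.smul_sum]
    refine Finset.sum_congr rfl fun i _ => ?_
    rw [smul_smul, ← pow_add]
    rfl
  have right : ((-1 : k) ^ ((b + 1) * (c + 1))) •
        leftInsC k a c b (toC k a f) H (toC k b g) v
      = ∑ i ∈ Finset.range a, ∑ l ∈ Finset.range (a - (i + 1)),
        ((-1 : k) ^ ((i + (b + l)) * (c + 1) + i * (b + 1))) •
          insC c (i + (b + l)) (insC b i (toC k a f) (toC k b g)) H v := by
    have swap : leftInsC k a c b (toC k a f) H (toC k b g) v
        = ∑ i ∈ Finset.range a, ∑ j ∈ Finset.Ico (i + 1) a,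
          ((-1 : k) ^ (i * (b + 1) + j * (c + 1))) •
            insC b i (insC c j (toC k a f) H) (toC k b g) v := by
      refine Finset.sum_comm' fun i j => ?_
      simp only [Finset.mem_range, Finset.mem_Ico]
      lia
    rw [swap, Finset.smul_sum]
    refine Finset.sum_congr rfl fun i _ => ?_
    rw [Finset.sum_Ico_eq_sum_range, Finset.smul_sum]
    refine Finset.sum_congr rfl fun l _ => ?_
    rw [← insC_insC_par (show i < i + 1 + l by lia), smul_smul, ← pow_add,
      show i + 1 + l + b - 1 = i + (b + l) by lia,
      show (b + 1) * (c + 1) + (i * (b + 1) + (i + 1 + l) * (c + 1))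
        = (i + (b + l)) * (c + 1) + i * (b + 1) + 2 * (c + 1) by ring,
      pow_add _ _ (2 * (c + 1)), pow_mul]
    simp
  rw [Pi.add_apply, Pi.add_apply, Pi.smul_apply, expand, right, circC_circC_right hbc, leftInsC,
    ← Finset.sum_add_distrib, ← Finset.sum_add_distrib]
  refine Finset.sum_congr rfl fun i hi => ?_
  have hi' := Finset.mem_range.1 hi
  rw [show a + b - 1 = i + (b + (a - (i + 1))) by lia, Finset.sum_range_add,
    Finset.sum_range_add _ b, add_assoc]

/-- The circle product is a graded right pre-Lie product. -/
theorem circC_preLie {a b c : ℕ} (hbc : 0 < b + c)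
    (f : MultilinearMap k (fun _ : Fin a => A) A)
    (g : MultilinearMap k (fun _ : Fin b => A) A) (h : MultilinearMap k (fun _ : Fin c => A) A) :
    circC k (a + b - 1) c (circC k a b (toC k a f) (toC k b g)) (toC k c h)
      = circC k a (b + c - 1) (toC k a f) (circC k b c (toC k b g) (toC k c h))
        + ((-1 : k) ^ ((b + 1) * (c + 1))) •
          (circC k (a + c - 1) b (circC k a c (toC k a f) (toC k c h)) (toC k b g)
            - circC k a (b + c - 1) (toC k a f) (circC k c b (toC k c h) (toC k b g))) := by
  rw [circC_circC_left hbc, circC_circC_left (show 0 < c + b by lia), Nat.add_comm c b,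
    Nat.mul_comm (c + 1)]
  rcases neg_one_pow_eq_or k ((b + 1) * (c + 1)) with e | e <;> rw [e] <;> module

theorem neg_one_zpow_sub_one (m : ℕ) : (-1 : k) ^ ((m : ℤ) - 1) = (-1) ^ (m + 1) := by
  rw [zpow_sub_one₀ (by simp), zpow_natCast, pow_succ, inv_neg_one]

theorem gerstC_eq (m n : ℕ) (F G : (ℕ → A) → A) :
    gerstC k m n F G
      = circC k m n F G - ((-1 : k) ^ ((m + 1) * (n + 1))) • circC k n m G F := by
  rw [gerstC, zpow_mul, neg_one_zpow_sub_one, pow_mul]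
  congr 2
  rcases neg_one_pow_eq_or k (m + 1) with e | e <;> rw [e]
  · simp
  · exact neg_one_zpow_sub_one n

end Module

variable [Ring A] [Algebra k A]

theorem hdelC_eq (n : ℕ) (F : (ℕ → A) → A) :
    hdelC k n F = ((-1 : k) ^ (n + 1)) •
        circC k 2 n (toC k 2 (MultilinearMap.mkPiAlgebraFin k 2 A)) F
      - circC k n 2 F (toC k 2 (MultilinearMap.mkPiAlgebraFin k 2 A)) := by
  funext v
  have inner : circC k n 2 F (toC k 2 (MultilinearMap.mkPiAlgebraFin k 2 A)) v
      = -∑ i : Fin n, ((-1 : k) ^ ((i : ℕ) + 1)) •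
        F (fun j => if j < (i : ℕ) then v j
          else if j = (i : ℕ) then v (i : ℕ) * v ((i : ℕ) + 1)
          else v (j + 1)) := by
    rw [circC, ← Finset.sum_neg_distrib]
    refine Finset.sum_congr rfl fun i _ => ?_
    rw [← neg_smul, pow_succ, mul_neg_one, neg_neg, mul_comm (i : ℕ), pow_mul]
    simp [toC, pow_succ]
  have outer : circC k 2 n (toC k 2 (MultilinearMap.mkPiAlgebraFin k 2 A)) F v
      = F v * v n + ((-1 : k) ^ (n + 1)) • (v 0 * F (fun j => v (j + 1))) := by
    simp [circC, toC, Fin.sum_univ_two, Nat.add_comm 1]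
  rw [Pi.sub_apply, Pi.smul_apply, inner, outer, hdelC, smul_add, smul_smul, ← pow_add,
    Even.neg_one_pow ⟨n + 1, rfl⟩]
  module

end Circle

/-- Compatibility of the Hochschild differential with the Gerstenhaber bracket:
for an `n`-cochain `f` and an `m`-cochain `g`,
`δ[f,g] = (-1)^{m-1}[δ(f), g] + [f, δ(g)]`. -/
theorem stmt_11 {k A : Type*} [Field k] [CharZero k] [Ring A] [Algebra k A] :
    ∀ (n m : ℕ) (f : MultilinearMap k (fun _ : Fin n => A) A)
      (g : MultilinearMap k (fun _ : Fin m => A) A),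
      hdelC k (n + m - 1) (gerstC k n m (toC k n f) (toC k m g))
        = ((-1 : k) ^ ((m : ℤ) - 1)) •
            gerstC k (n + 1) m (hdelC k n (toC k n f)) (toC k m g)
          + gerstC k n (m + 1) (toC k n f) (hdelC k m (toC k m g)) := by
  intro n m f g
  rcases Nat.eq_zero_or_pos (n + m) with h0 | hpos
  · obtain ⟨rfl, rfl⟩ : n = 0 ∧ m = 0 := by lia
    funext v
    simp [hdelC, gerstC, circC, toC, Subsingleton.elim _ (default : Fin 0 → A)]
  · have hfg := circC_preLie (by lia) f g (MultilinearMap.mkPiAlgebraFin k 2 A)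
    have hgf := circC_preLie (by lia) g f (MultilinearMap.mkPiAlgebraFin k 2 A)
    have hmul := circC_preLie hpos (MultilinearMap.mkPiAlgebraFin k 2 A) f g
    have two_add (l : ℕ) : 2 + l - 1 = l + 1 := by lia
    have sign_two (l : ℕ) : (-1 : k) ^ ((l + 1) * (2 + 1)) = (-1) ^ (l + 1) := by
      rw [mul_comm, pow_mul]
      simp [pow_succ]
    have sign_pred : (-1 : k) ^ (n + m - 1 + 1) = (-1) ^ (n + 1) * (-1) ^ (m + 1) := by
      rw [← pow_add, show n + 1 + (m + 1) = n + m - 1 + 1 + 2 by lia, pow_add _ _ 2]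
      simp
    have sign_left : (-1 : k) ^ ((n + 1 + 1) * (m + 1))
        = (-1) ^ ((n + 1) * (m + 1)) * (-1) ^ (m + 1) := by
      rw [← pow_add]
      ring_nf
    have sign_right : (-1 : k) ^ ((n + 1) * (m + 1 + 1))
        = (-1) ^ ((n + 1) * (m + 1)) * (-1) ^ (n + 1) := by
      rw [← pow_add]
      ring_nf
    simp only [two_add, sign_two, Nat.add_succ_sub_one, Nat.add_comm m n] at hfg hgf hmul
    simp only [hdelC_eq, gerstC_eq, neg_one_zpow_sub_one, circC_sub_left, circC_smul_left,
      circC_sub_right, circC_smul_right, sign_pred, sign_left, sign_right]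
    rw [hfg, hgf, hmul]
    rcases neg_one_pow_eq_or k (n + 1) with en | en <;>
    rcases neg_one_pow_eq_or k (m + 1) with em | em <;>
    rcases neg_one_pow_eq_or k ((n + 1) * (m + 1)) with enm | enm <;>
    rw [en, em, enm] <;> module
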